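/- Let f : (0,∞) → ℝ be operator convex and let ρ, σ ∈ M_n(ℂ) be positive definite. Then the standard f-divergence is dominated by the maximal f-divergence: S_f(ρ‖σ) ≤ Ŝ_f(ρ‖σ); explicitly, Σ_{a,b} b·f(a/b)·Tr(P_a Q_b) ≤ Tr(σ^{1/2} f(σ^{−1/2} ρ σ^{−1/2}) σ^{1/2}), where the sum runs over the eigenvalues a of ρ and b of σ with spectral projections P_a, Q_b. -/

import Mathlib

open Matrix
open scoped ComplexOrder

/-- Moore–Penrose power of a matrix: apply `x ↦ x ^ t` to the nonzero eigenvalues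
(with `0 ^ t := 0`) via the continuous functional calculus. -/
noncomputable def mpow {n : ℕ} (A : Matrix (Fin n) (Fin n) ℂ) (t : ℝ) :
    Matrix (Fin n) (Fin n) ℂ :=
  cfc (fun x : ℝ => if x = 0 then 0 else x ^ t) A

/-- `f : (0,∞) → ℝ` is operator convex: for every size `m`, positive definite
`A B : M_m(ℂ)` and `t ∈ [0,1]`, `f(tA + (1-t)B) ≤ t f(A) + (1-t) f(B)` in the
Loewner order (`f` applied by the spectral functional calculus). -/
def OperatorConvexOn (f : ℝ → ℝ) : Prop :=
  ∀ (m : ℕ) (A B : Matrix (Fin m) (Fin m) ℂ), A.PosDef → B.PosDef →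
    ∀ t : ℝ, 0 ≤ t → t ≤ 1 →
      (t • cfc f A + (1 - t) • cfc f B - cfc f (t • A + (1 - t) • B)).PosSemidef

/-- Spectral projection of a Hermitian matrix `A` onto the eigenvalue `a`. -/
noncomputable def specProj {n : ℕ} (A : Matrix (Fin n) (Fin n) ℂ) (a : ℝ) :
    Matrix (Fin n) (Fin n) ℂ :=
  cfc (fun x : ℝ => if x = a then (1 : ℝ) else 0) A

/-!
For operator convex `f` the noncommutative perspective
`P(L, R) = R^{1/2} f(R^{-1/2} L R^{-1/2}) R^{1/2}` is jointly subadditive, by the Hansen–Pedersen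
form of Jensen's inequality. The maximal divergence is `Tr P(ρ, σ)`, while the standard one is
`⟨1, P(𝓛 ρ, 𝓡 σ) 1⟩`, where `𝓛 ρ` is left multiplication by `ρ` and `𝓡 σ` right multiplication by
`σ`: the products `P_a Q_b` are common eigenvectors of the two with eigenvalues `a` and `b`.

Let `E_t` be the spectral projections of `σ^{-1/2} ρ σ^{-1/2}` and `M_t = σ^{1/2} E_t σ^{1/2}`. Then
`σ = ∑ M_t` and `ρ = ∑ t M_t`, and since `𝓛 (t M_t)` and `t 𝓡 (M_t)` agree on the vector `1`,
subadditivity bounds the standard divergence by `∑ f(t) Tr M_t = Tr P(ρ, σ)`.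
-/

open scoped MatrixOrder

section FunctionalCalculus

variable {p q ι 𝕜 : Type*} [Fintype p] [DecidableEq p] [Fintype q] [DecidableEq q] [RCLike 𝕜]

lemma exists_polynomial_aeval_eq_cfc (f : ℝ → ℝ) {A : Matrix p p 𝕜} {B : Matrix q q 𝕜}
    (hA : A.IsHermitian) (hB : B.IsHermitian) :
    ∃ P : Polynomial ℝ, cfc f A = Polynomial.aeval A P ∧ cfc f B = Polynomial.aeval B P := by
  classical
  let nodes := A.finite_real_spectrum.toFinset ∪ B.finite_real_spectrum.toFinset
  let P := Lagrange.interpolate nodes id f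
  have eval_node : ∀ x ∈ nodes, f x = P.eval x := fun x hx ↦
    (Lagrange.eval_interpolate_at_node (v := id) f Function.injective_id.injOn hx).symm
  refine ⟨P, ?_, ?_⟩
  · rw [← cfc_polynomial P A hA]
    exact cfc_congr fun x hx ↦ eval_node x (by simp [nodes, hx])
  · rw [← cfc_polynomial P B hB]
    exact cfc_congr fun x hx ↦ eval_node x (by simp [nodes, hx])

lemma cfc_mul_eq_mul_cfc (f : ℝ → ℝ) {A : Matrix p p 𝕜} {B : Matrix q q 𝕜}
    (hA : A.IsHermitian) (hB : B.IsHermitian) {V : Matrix p q 𝕜} (hV : A * V = V * B) :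
    cfc f A * V = V * cfc f B := by
  obtain ⟨P, hPA, hPB⟩ := exists_polynomial_aeval_eq_cfc f hA hB
  have pow_mul_eq (k : ℕ) : A ^ k * V = V * B ^ k := by
    induction k with
    | zero => simp
    | succ k ih =>
      rw [pow_succ, pow_succ, Matrix.mul_assoc, hV, ← Matrix.mul_assoc, ih, Matrix.mul_assoc]
  simp only [hPA, hPB, Polynomial.aeval_eq_sum_range, Matrix.sum_mul, Matrix.mul_sum,
    Matrix.smul_mul, Matrix.mul_smul, pow_mul_eq]

lemma cfc_mulVec_of_mulVec_eq_smul (f : ℝ → ℝ) {A : Matrix p p 𝕜} (hA : A.IsHermitian)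
    {v : p → 𝕜} {r : ℝ} (hv : A *ᵥ v = r • v) : cfc f A *ᵥ v = f r • v := by
  have intertwines : A * replicateCol Unit v =
      replicateCol Unit v * algebraMap ℝ (Matrix Unit Unit 𝕜) r := by
    rw [← replicateCol_mulVec, hv, replicateCol_smul, Algebra.algebraMap_eq_smul_one,
      Matrix.mul_smul, Matrix.mul_one]
  have isHermitian_scalar : (algebraMap ℝ (Matrix Unit Unit 𝕜) r).IsHermitian :=
    IsSelfAdjoint.algebraMap _ (IsSelfAdjoint.all r)
  have h := cfc_mul_eq_mul_cfc f hA isHermitian_scalar intertwines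
  rwa [cfc_algebraMap, ← replicateCol_mulVec, Algebra.algebraMap_eq_smul_one, Matrix.mul_smul,
    Matrix.mul_one, ← replicateCol_smul, replicateCol_inj] at h

lemma cfc_submatrix_equiv (f : ℝ → ℝ) {A : Matrix p p 𝕜} (hA : A.IsHermitian) (e : q ≃ p) :
    cfc f (A.submatrix e e) = (cfc f A).submatrix e e := by
  have intertwines : A.submatrix e e * (1 : Matrix p p 𝕜).submatrix e (Equiv.refl p) =
      (1 : Matrix p p 𝕜).submatrix e (Equiv.refl p) * A := by
    rw [mul_submatrix_one, one_submatrix_mul, submatrix_submatrix]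
    ext
    simp
  have h := cfc_mul_eq_mul_cfc f (hA.submatrix e) hA intertwines
  rw [mul_submatrix_one, one_submatrix_mul] at h
  ext i j
  simpa using congr($h i (e j))

variable [Fintype ι] [DecidableEq ι]

lemma cfc_blockDiagonal (f : ℝ → ℝ) {A : ι → Matrix p p 𝕜} (hA : ∀ i, (A i).IsHermitian) :
    cfc f (blockDiagonal A) = blockDiagonal fun i ↦ cfc f (A i) := by
  have hD : (blockDiagonal A).IsHermitian := by
    rw [Matrix.IsHermitian, blockDiagonal_conjTranspose]
    exact congrArg blockDiagonal (funext hA)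
  ext ⟨a, i⟩ ⟨b, j⟩
  let incl : Matrix (p × ι) p 𝕜 := (1 : Matrix (p × ι) (p × ι) 𝕜).submatrix id (·, j)
  have intertwines : blockDiagonal A * incl = incl * A j := by
    ext ⟨a, i⟩ b
    rcases eq_or_ne i j with rfl | hij
    · simp [incl, Matrix.mul_apply, blockDiagonal_apply, one_apply]
    · simp [incl, Matrix.mul_apply, blockDiagonal_apply, one_apply, hij]
  have h := congr($(cfc_mul_eq_mul_cfc f hD (hA j) intertwines) (a, i) b)
  rcases eq_or_ne i j with rfl | hij
  · simpa [incl, Matrix.mul_apply, one_apply, Fintype.sum_prod_type, ite_and] using h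
  · simpa [incl, Matrix.mul_apply, one_apply, Fintype.sum_prod_type, ite_and, hij,
      blockDiagonal_apply] using h

end FunctionalCalculus

lemma posDef_blockDiagonal {p ι 𝕜 : Type*} [Finite p] [Finite ι] [DecidableEq ι] [RCLike 𝕜]
    {A : ι → Matrix p p 𝕜} (hA : ∀ i, (A i).PosDef) : (blockDiagonal A).PosDef := by
  classical
  have := Fintype.ofFinite p
  have := Fintype.ofFinite ι
  choose B hB using fun i ↦ CStarAlgebra.nonneg_iff_eq_star_mul_self.mp (hA i).posSemidef.nonneg
  have eq_mul : blockDiagonal A = (blockDiagonal B)ᴴ * blockDiagonal B := by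
    rw [blockDiagonal_conjTranspose, ← blockDiagonal_mul]
    exact congrArg blockDiagonal (funext hB)
  have isUnit : IsUnit (blockDiagonal A) :=
    (Pi.isUnit_iff.mpr fun i ↦ (hA i).isUnit).map (blockDiagonalRingHom p ι 𝕜)
  exact (eq_mul ▸ posSemidef_conjTranspose_mul_self _ :
    (blockDiagonal A).PosSemidef).posDef_iff_isUnit.mpr isUnit

section Isometry

variable {p q 𝕜 : Type*} [DecidableEq p] [Fintype q] [RCLike 𝕜]

/-- The reflection `2VV* - 1` in the range of an isometry `V`: the self-adjoint unitary that is `1`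
on the range of `V` and `-1` on its orthogonal complement. -/
noncomputable def rangeReflection (V : Matrix p q 𝕜) : Matrix p p 𝕜 := (2 : ℝ) • (V * Vᴴ) - 1

lemma conjTranspose_rangeReflection (V : Matrix p q 𝕜) :
    (rangeReflection V)ᴴ = rangeReflection V := by
  simp [rangeReflection]

variable [Fintype p]

/-- The pinching of `X` to the range of `V` and its complement, as the average of `X` and its
conjugate by the reflection; the coefficients have the shape `t`, `1 - t` of `OperatorConvexOn`. -/
noncomputable def pinching (V : Matrix p q 𝕜) (X : Matrix p p 𝕜) : Matrix p p 𝕜 :=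
  (1 / 2 : ℝ) • X + (1 - 1 / 2 : ℝ) • (rangeReflection V * X * rangeReflection V)

lemma isHermitian_pinching (V : Matrix p q 𝕜) {X : Matrix p p 𝕜} (hX : X.IsHermitian) :
    (pinching V X).IsHermitian := by
  have h := isHermitian_mul_mul_conjTranspose (rangeReflection V) hX
  rw [conjTranspose_rangeReflection] at h
  exact (IsSelfAdjoint.smul (.all _) hX).add (IsSelfAdjoint.smul (.all _) h)

variable [DecidableEq q] {V : Matrix p q 𝕜}

lemma rangeReflection_mul (hV : Vᴴ * V = 1) : rangeReflection V * V = V := by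
  rw [rangeReflection, Matrix.sub_mul, Matrix.smul_mul, Matrix.mul_assoc, hV, Matrix.mul_one,
    Matrix.one_mul, two_smul, add_sub_cancel_right]

lemma rangeReflection_mul_self (hV : Vᴴ * V = 1) :
    rangeReflection V * rangeReflection V = 1 := by
  nth_rw 2 [rangeReflection]
  rw [Matrix.mul_sub, Matrix.mul_smul, ← Matrix.mul_assoc, rangeReflection_mul hV, Matrix.mul_one,
    rangeReflection, sub_sub_cancel]

lemma pinching_mul (hV : Vᴴ * V = 1) (X : Matrix p p 𝕜) :
    pinching V X * V = V * (Vᴴ * X * V) := by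
  rw [pinching, Matrix.add_mul, Matrix.smul_mul, Matrix.smul_mul, Matrix.mul_assoc _ _ V,
    rangeReflection_mul hV, rangeReflection]
  simp only [Matrix.sub_mul, Matrix.smul_mul, Matrix.one_mul, Matrix.mul_assoc]
  module

lemma conjTranspose_mul_pinching_mul (hV : Vᴴ * V = 1) (X : Matrix p p 𝕜) :
    Vᴴ * pinching V X * V = Vᴴ * X * V := by
  rw [Matrix.mul_assoc, pinching_mul hV, ← Matrix.mul_assoc, hV, Matrix.one_mul]

end Isometry

namespace OperatorConvexOn

variable {p q : Type*} [Fintype p] [DecidableEq p] [Fintype q] [DecidableEq q] {f : ℝ → ℝ}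

theorem cfc_smul_add_smul_le (hf : OperatorConvexOn f) {A B : Matrix p p ℂ} (hA : A.PosDef)
    (hB : B.PosDef) {t : ℝ} (ht₀ : 0 ≤ t) (ht₁ : t ≤ 1) :
    cfc f (t • A + (1 - t) • B) ≤ t • cfc f A + (1 - t) • cfc f B := by
  let e := (Fintype.equivFin p).symm
  have isHermitian_comb : (t • A + (1 - t) • B).IsHermitian :=
    (IsSelfAdjoint.smul (.all t) hA.isHermitian).add (IsSelfAdjoint.smul (.all _) hB.isHermitian)
  have h := hf _ _ _ (hA.submatrix e.injective) (hB.submatrix e.injective) t ht₀ ht₁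
  have submatrix_comb (X Y : Matrix p p ℂ) : t • X.submatrix e e + (1 - t) • Y.submatrix e e =
    (t • X + (1 - t) • Y).submatrix e e := rfl
  rw [cfc_submatrix_equiv f hA.isHermitian, cfc_submatrix_equiv f hB.isHermitian, submatrix_comb,
    submatrix_comb, cfc_submatrix_equiv f isHermitian_comb] at h
  rw [Matrix.le_iff]
  exact (posSemidef_submatrix_equiv e).mp h

theorem convexOn (hf : OperatorConvexOn f) : ConvexOn ℝ (Set.Ioi 0) f := by
  refine ⟨convex_Ioi 0, fun x hx y hy a b ha hb hab ↦ ?_⟩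
  obtain rfl : b = 1 - a := by linarith
  let scalar := algebraMap ℝ (Matrix Unit Unit ℂ)
  have posDef_scalar {z : ℝ} (hz : 0 < z) : (scalar z).PosDef := by
    simpa only [scalar, Algebra.algebraMap_eq_smul_one] using PosDef.one.smul hz
  have h := hf.cfc_smul_add_smul_le (posDef_scalar hx) (posDef_scalar hy) ha (by linarith)
  have scalar_comb (u v : ℝ) :
      a • scalar u + (1 - a) • scalar v = scalar (a • u + (1 - a) • v) := by
    simp [scalar, Algebra.algebraMap_eq_smul_one, add_smul, smul_smul]
  simp only [scalar_comb, scalar, cfc_algebraMap] at h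
  exact algebraMap_le_algebraMap.mp h

theorem continuousOn (hf : OperatorConvexOn f) : ContinuousOn f (Set.Ioi 0) :=
  hf.convexOn.continuousOn isOpen_Ioi

theorem cfc_pinching_le (hf : OperatorConvexOn f) {A : Matrix p p ℂ} (hA : A.PosDef)
    {V : Matrix p q ℂ} (hV : Vᴴ * V = 1) : cfc f (pinching V A) ≤ pinching V (cfc f A) := by
  set S := rangeReflection V
  have hSS : S * S = 1 := rangeReflection_mul_self hV
  have posDef_conj : (S * A * S).PosDef := by
    have h := (Matrix.IsUnit.posDef_star_left_conjugate_iff (.of_mul_eq_one S hSS)).mpr hA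
    rwa [star_eq_conjTranspose, conjTranspose_rangeReflection] at h
  have cfc_conj : cfc f (S * A * S) = S * cfc f A * S := by
    have h : cfc f (S * A * S) * S = S * cfc f A :=
      cfc_mul_eq_mul_cfc f posDef_conj.isHermitian hA.isHermitian
        (by rw [Matrix.mul_assoc, hSS, Matrix.mul_one])
    rw [← h, Matrix.mul_assoc (cfc f _), hSS, Matrix.mul_one]
  have h := hf.cfc_smul_add_smul_le hA posDef_conj (t := 1 / 2) (by norm_num) (by norm_num)
  rwa [cfc_conj] at h

/-- The Hansen–Pedersen form of Jensen's inequality: `Vᴴ * A * V` is a diagonal block of the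
pinching of `A`, on which `f` acts blockwise. -/
theorem cfc_conjTranspose_mul_mul_le (hf : OperatorConvexOn f) {A : Matrix p p ℂ} (hA : A.PosDef)
    {V : Matrix p q ℂ} (hV : Vᴴ * V = 1) : cfc f (Vᴴ * A * V) ≤ Vᴴ * cfc f A * V := by
  have compress_cfc : Vᴴ * cfc f (pinching V A) * V = cfc f (Vᴴ * A * V) := by
    rw [Matrix.mul_assoc, cfc_mul_eq_mul_cfc f (isHermitian_pinching V hA.isHermitian)
      (isHermitian_conjTranspose_mul_mul V hA.isHermitian) (pinching_mul hV A),
      ← Matrix.mul_assoc, hV, Matrix.one_mul]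
  have h := (Matrix.le_iff.mp (hf.cfc_pinching_le hA hV)).conjTranspose_mul_mul_same V
  rwa [Matrix.mul_sub, Matrix.sub_mul, compress_cfc, conjTranspose_mul_pinching_mul hV,
    ← Matrix.le_iff] at h

end OperatorConvexOn

section ColumnStack

variable {p q ι : Type*} [Fintype p] [Fintype ι] [DecidableEq ι]

/-- The matrices `W i` on top of each other, with rows indexed as in `Matrix.blockDiagonal`. -/
def columnStack (W : ι → Matrix p q ℂ) : Matrix (p × ι) q ℂ := of fun x y ↦ W x.2 x.1 y

lemma conjTranspose_columnStack_mul_blockDiagonal_mul (W : ι → Matrix p q ℂ)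
    (A : ι → Matrix p p ℂ) :
    (columnStack W)ᴴ * blockDiagonal A * columnStack W = ∑ i, (W i)ᴴ * A i * W i := by
  ext a b
  simp only [columnStack, Matrix.mul_apply, Matrix.sum_apply, conjTranspose_apply, of_apply,
    blockDiagonal_apply, mul_ite, mul_zero, Fintype.sum_prod_type, Finset.sum_ite_eq',
    Finset.mem_univ, if_true]
  exact Finset.sum_comm

end ColumnStack

theorem OperatorConvexOn.cfc_sum_le {p q ι : Type*} [Fintype p] [DecidableEq p] [Fintype q]
    [DecidableEq q] [Fintype ι] {f : ℝ → ℝ} (hf : OperatorConvexOn f) {A : ι → Matrix p p ℂ}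
    (hA : ∀ i, (A i).PosDef) {W : ι → Matrix p q ℂ} (hW : ∑ i, (W i)ᴴ * W i = 1) :
    cfc f (∑ i, (W i)ᴴ * A i * W i) ≤ ∑ i, (W i)ᴴ * cfc f (A i) * W i := by
  classical
  have isometry : (columnStack W)ᴴ * columnStack W = 1 := by
    simpa [hW] using conjTranspose_columnStack_mul_blockDiagonal_mul W 1
  have h := hf.cfc_conjTranspose_mul_mul_le (posDef_blockDiagonal hA) isometry
  rwa [cfc_blockDiagonal f fun i ↦ (hA i).isHermitian,
    conjTranspose_columnStack_mul_blockDiagonal_mul,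
    conjTranspose_columnStack_mul_blockDiagonal_mul] at h

section Perspective

variable {p ι : Type*} [Fintype p] [DecidableEq p] {f : ℝ → ℝ} {L R : Matrix p p ℂ}

lemma posDef_sqrt (hR : R.PosDef) : (CFC.sqrt R).PosDef :=
  hR.isStrictlyPositive.sqrt.posDef

lemma posDef_inv_sqrt_mul_mul (hL : L.PosDef) (hR : R.PosDef) :
    ((CFC.sqrt R)⁻¹ * L * (CFC.sqrt R)⁻¹).PosDef := by
  have hS := (posDef_sqrt hR).inv
  have h := (Matrix.IsUnit.posDef_star_left_conjugate_iff hS.isUnit).mpr hL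
  rwa [star_eq_conjTranspose, hS.isHermitian.eq] at h

lemma isHermitian_inv_sqrt_mul_mul (hL : L.IsHermitian) (hR : R.PosDef) :
    ((CFC.sqrt R)⁻¹ * L * (CFC.sqrt R)⁻¹).IsHermitian := by
  have h := isHermitian_conjTranspose_mul_mul (CFC.sqrt R)⁻¹ hL
  rwa [(posDef_sqrt hR).inv.isHermitian.eq] at h

/-- The noncommutative perspective `R^{1/2} f(R^{-1/2} L R^{-1/2}) R^{1/2}` of `f`. -/
noncomputable def perspective (f : ℝ → ℝ) (L R : Matrix p p ℂ) : Matrix p p ℂ :=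
  CFC.sqrt R * cfc f ((CFC.sqrt R)⁻¹ * L * (CFC.sqrt R)⁻¹) * CFC.sqrt R

lemma perspective_mulVec (f : ℝ → ℝ) (hL : L.IsHermitian) (hR : R.PosDef) {v : p → ℂ} {t : ℝ}
    (hv : L *ᵥ v = t • (R *ᵥ v)) : perspective f L R *ᵥ v = f t • (R *ᵥ v) := by
  have isUnit_det := (isUnit_iff_isUnit_det _).mp (posDef_sqrt hR).isUnit
  have sqrt_mul_sqrt : CFC.sqrt R * CFC.sqrt R = R :=
    CFC.sqrt_mul_sqrt_self R hR.posSemidef.nonneg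
  have eigenvector : ((CFC.sqrt R)⁻¹ * L * (CFC.sqrt R)⁻¹) *ᵥ (CFC.sqrt R *ᵥ v) =
      t • (CFC.sqrt R *ᵥ v) := by
    rw [mulVec_mulVec, nonsing_inv_mul_cancel_right _ _ isUnit_det, ← mulVec_mulVec, hv,
      mulVec_smul, mulVec_mulVec]
    nth_rw 2 [← sqrt_mul_sqrt]
    rw [nonsing_inv_mul_cancel_left _ _ isUnit_det]
  rw [perspective, ← mulVec_mulVec, ← mulVec_mulVec,
    cfc_mulVec_of_mulVec_eq_smul f (isHermitian_inv_sqrt_mul_mul hL hR) eigenvector, mulVec_smul,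
    mulVec_mulVec, sqrt_mul_sqrt]

lemma sqrt_mul_inv_sqrt_mul_mul (L : Matrix p p ℂ) (hR : R.PosDef) :
    CFC.sqrt R * ((CFC.sqrt R)⁻¹ * L * (CFC.sqrt R)⁻¹) * CFC.sqrt R = L := by
  have isUnit_det := (isUnit_iff_isUnit_det _).mp (posDef_sqrt hR).isUnit
  rw [Matrix.mul_assoc, nonsing_inv_mul_cancel_right _ _ isUnit_det,
    mul_nonsing_inv_cancel_left _ _ isUnit_det]

lemma inv_sqrt_mul_self_mul (hR : R.PosDef) : (CFC.sqrt R)⁻¹ * R * (CFC.sqrt R)⁻¹ = 1 := by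
  have isUnit_det := (isUnit_iff_isUnit_det _).mp (posDef_sqrt hR).isUnit
  nth_rw 2 [← CFC.sqrt_mul_sqrt_self R hR.posSemidef.nonneg]
  rw [nonsing_inv_mul_cancel_left _ _ isUnit_det, mul_nonsing_inv _ isUnit_det]

lemma perspective_one (hL : L.IsHermitian) (hR : R.PosDef) :
    perspective (fun _ ↦ 1) L R = R := by
  rw [perspective, cfc_const_one ℝ _ (isHermitian_inv_sqrt_mul_mul hL hR).isSelfAdjoint,
    Matrix.mul_one, CFC.sqrt_mul_sqrt_self R hR.posSemidef.nonneg]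

lemma perspective_id (hL : L.IsHermitian) (hR : R.PosDef) : perspective (fun x ↦ x) L R = L := by
  rw [perspective, cfc_id' ℝ _ (isHermitian_inv_sqrt_mul_mul hL hR).isSelfAdjoint,
    sqrt_mul_inv_sqrt_mul_mul L hR]

-- Jensen's inequality for the contractions `(R i)^{1/2} (∑ j, R j)^{-1/2}`.
theorem OperatorConvexOn.perspective_sum_le [Fintype ι] (hf : OperatorConvexOn f)
    {L R : ι → Matrix p p ℂ} (hL : ∀ i, (L i).PosDef) (hR : ∀ i, (R i).PosDef) :
    perspective f (∑ i, L i) (∑ i, R i) ≤ ∑ i, perspective f (L i) (R i) := by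
  rcases isEmpty_or_nonempty ι with _ | _
  · simp [perspective]
  have hR_sum : (∑ i, R i).PosDef := posDef_sum Finset.univ_nonempty fun i _ ↦ hR i
  have hS : (CFC.sqrt (∑ i, R i)).PosDef := posDef_sqrt hR_sum
  set S := CFC.sqrt (∑ i, R i)
  let W (i : ι) : Matrix p p ℂ := CFC.sqrt (R i) * S⁻¹
  have sum_conj_W (C : ι → Matrix p p ℂ) : ∑ i, (W i)ᴴ * C i * W i =
      S⁻¹ * (∑ i, CFC.sqrt (R i) * C i * CFC.sqrt (R i)) * S⁻¹ := by
    simp only [W, conjTranspose_mul, hS.inv.isHermitian.eq, (posDef_sqrt (hR _)).isHermitian.eq,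
      Matrix.mul_sum, Matrix.sum_mul, Matrix.mul_assoc]
  have sum_W : ∑ i, (W i)ᴴ * W i = 1 := by
    have h := sum_conj_W fun _ ↦ 1
    simp only [Matrix.mul_one, CFC.sqrt_mul_sqrt_self _ (hR _).posSemidef.nonneg] at h
    exact h.trans (inv_sqrt_mul_self_mul hR_sum)
  have jensen := hf.cfc_sum_le (fun i ↦ posDef_inv_sqrt_mul_mul (hL i) (hR i)) sum_W
  simp only [sum_conj_W, sqrt_mul_inv_sqrt_mul_mul _ (hR _)] at jensen
  have h := hS.isHermitian.isSelfAdjoint.conjugate_le_conjugate jensen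
  rwa [sqrt_mul_inv_sqrt_mul_mul _ hR_sum] at h

end Perspective

section Superoperators

variable {p : Type*} [DecidableEq p]

/-- The superoperator `X ↦ A * X` as a matrix acting on vectorizations. -/
noncomputable def leftMul : Matrix p p ℂ →ₗ[ℝ] Matrix (p × p) (p × p) ℂ :=
  kroneckerBilinear (R := ℝ) (1 : Matrix p p ℂ)

/-- The superoperator `X ↦ X * B` as a matrix acting on vectorizations. -/
noncomputable def rightMul : Matrix p p ℂ →ₗ[ℝ] Matrix (p × p) (p × p) ℂ :=
  (kroneckerBilinear (R := ℝ)).flip (1 : Matrix p p ℂ) ∘ₗ (transposeLinearEquiv p p ℝ ℂ).toLinearMap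

lemma posDef_leftMul [Finite p] {A : Matrix p p ℂ} (hA : A.PosDef) : (leftMul A).PosDef :=
  PosDef.one.kronecker hA

lemma posDef_rightMul [Finite p] {B : Matrix p p ℂ} (hB : B.PosDef) : (rightMul B).PosDef :=
  hB.transpose.kronecker PosDef.one

variable [Fintype p]

lemma leftMul_mulVec_vec (A X : Matrix p p ℂ) : leftMul A *ᵥ vec X = vec (A * X) :=
  (vec_mul_eq_mulVec A X).symm

lemma rightMul_mulVec_vec (B X : Matrix p p ℂ) : rightMul B *ᵥ vec X = vec (X * B) :=
  (kronecker_mulVec_vec (1 : Matrix p p ℂ) X Bᵀ).trans (by simp)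

lemma perspective_mulVec_vec (f : ℝ → ℝ) {ρ σ X : Matrix p p ℂ} (hρ : ρ.PosDef) (hσ : σ.PosDef)
    {a b : ℝ} (mul_eq : ρ * X = a • X) (eq_mul : X * σ = b • X) (hb : b ≠ 0) :
    perspective f (leftMul ρ) (rightMul σ) *ᵥ vec X = (b * f (a / b)) • vec X := by
  have rightMul_vec : rightMul σ *ᵥ vec X = b • vec X := by
    rw [rightMul_mulVec_vec, eq_mul, vec_smul]
  have leftMul_vec : leftMul ρ *ᵥ vec X = (a / b) • (rightMul σ *ᵥ vec X) := by
    rw [rightMul_vec, leftMul_mulVec_vec, mul_eq, vec_smul, smul_smul, div_mul_cancel₀ a hb]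
  rw [perspective_mulVec f (posDef_leftMul hρ).isHermitian (posDef_rightMul hσ) leftMul_vec,
    rightMul_vec, smul_smul, mul_comm]

end Superoperators

section Blending

open Topology

variable {ι E : Type*} [Fintype ι] [AddCommGroup E] [Module ℝ E]

/-- Each `x i` mixed with a multiple of the total, normalized so that the total is unchanged. -/
noncomputable def blend (δ : ℝ) (x : ι → E) (i : ι) : E :=
  (1 + Fintype.card ι * δ)⁻¹ • (x i + δ • ∑ j, x j)

/-- The weights for which the weighted total of `blend δ x` is that of `x` for the weights `t`. -/
def blendWeight (δ : ℝ) (t : ι → ℝ) (i : ι) : ℝ := t i + δ * (Fintype.card ι * t i - ∑ j, t j)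

lemma sum_blend {δ : ℝ} (hδ : 0 ≤ δ) (x : ι → E) : ∑ i, blend δ x i = ∑ i, x i := by
  simp only [blend]
  rw [← Finset.smul_sum, Finset.sum_add_distrib, Finset.sum_const, Finset.card_univ,
    inv_smul_eq_iff₀ (by positivity)]
  module

lemma sum_blendWeight_smul_blend {δ : ℝ} (hδ : 0 ≤ δ) (t : ι → ℝ) (x : ι → E) :
    ∑ i, blendWeight δ t i • blend δ x i = ∑ i, t i • x i := by
  simp only [blend, smul_comm _ (1 + Fintype.card ι * δ)⁻¹]
  rw [← Finset.smul_sum, inv_smul_eq_iff₀ (by positivity)]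
  have expand (i : ι) : blendWeight δ t i • (x i + δ • ∑ j, x j) =
      (1 + Fintype.card ι * δ) • t i • x i - (δ * ∑ j, t j) • x i +
        (blendWeight δ t i * δ) • ∑ j, x j := by
    simp only [blendWeight]
    module
  have sum_blendWeight : ∑ i, blendWeight δ t i = ∑ i, t i := by
    simp only [blendWeight, Finset.sum_add_distrib, ← Finset.mul_sum, Finset.sum_sub_distrib,
      Finset.sum_const, Finset.card_univ, nsmul_eq_mul, sub_self, mul_zero, add_zero]
  simp only [expand, Finset.sum_add_distrib, Finset.sum_sub_distrib, ← Finset.smul_sum,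
    ← Finset.sum_smul, ← Finset.sum_mul, sum_blendWeight]
  module

lemma tendsto_blendWeight (t : ι → ℝ) (i : ι) :
    Filter.Tendsto (blendWeight · t i) (𝓝 0) (𝓝 (t i)) := by
  have h : Continuous (blendWeight · t i) := by
    unfold blendWeight
    fun_prop
  simpa [blendWeight] using h.tendsto 0

lemma tendsto_blend [TopologicalSpace E] [ContinuousAdd E] [ContinuousSMul ℝ E] (x : ι → E)
    (i : ι) : Filter.Tendsto (blend · x i) (𝓝 0) (𝓝 (x i)) := by
  have h : ContinuousAt (blend · x i) 0 := by
    unfold blend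
    fun_prop (disch := simp)
  simpa [blend] using h.tendsto

end Blending

section StandardDivergence

open Filter Topology

variable {p ι : Type*} [Fintype p] [DecidableEq p] {f : ℝ → ℝ}

/-- The standard `f`-divergence `S_f(ρ‖σ)`, as the expectation in the identity matrix of the
perspective of left multiplication by `ρ` and right multiplication by `σ`. -/
noncomputable def standardDivergence (f : ℝ → ℝ) (ρ σ : Matrix p p ℂ) : ℝ :=
  (star (vec 1) ⬝ᵥ (perspective f (leftMul ρ) (rightMul σ) *ᵥ vec 1)).re

lemma star_vec_one_dotProduct_vec (X : Matrix p p ℂ) : star (vec 1) ⬝ᵥ vec X = X.trace := by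
  rw [star_vec_dotProduct_vec, conjTranspose_one, Matrix.one_mul]

variable [Fintype ι] {M : ι → Matrix p p ℂ} {t : ι → ℝ}

theorem OperatorConvexOn.standardDivergence_sum_le (hf : OperatorConvexOn f)
    (hM : ∀ i, (M i).PosDef) (ht : ∀ i, 0 < t i) :
    standardDivergence f (∑ i, t i • M i) (∑ i, M i) ≤ ∑ i, f (t i) * (M i).trace.re := by
  have hL (i : ι) : (leftMul (t i • M i)).PosDef := posDef_leftMul ((hM i).smul (ht i))
  have hR (i : ι) : (rightMul (M i)).PosDef := posDef_rightMul (hM i)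
  have perspective_vec_one (i : ι) :
      perspective f (leftMul (t i • M i)) (rightMul (M i)) *ᵥ vec 1 = f (t i) • vec (M i) := by
    rw [perspective_mulVec f (hL i).isHermitian (hR i) (t := t i), rightMul_mulVec_vec,
      Matrix.one_mul]
    rw [leftMul_mulVec_vec, rightMul_mulVec_vec, Matrix.mul_one, Matrix.one_mul, vec_smul]
  have h := (Matrix.le_iff.mp (hf.perspective_sum_le hL hR)).re_dotProduct_nonneg (vec 1)
  rw [sub_mulVec, dotProduct_sub, map_sub, sub_nonneg, ← map_sum, ← map_sum] at h
  refine h.trans_eq ?_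
  simp only [sum_mulVec, perspective_vec_one, dotProduct_sum, dotProduct_smul,
    star_vec_one_dotProduct_vec, map_sum, RCLike.smul_re, RCLike.re_to_complex]

-- The terms `M i` may be singular, so the previous bound is applied to `blend δ M`, for `δ → 0`.
theorem OperatorConvexOn.standardDivergence_sum_le_of_posSemidef (hf : OperatorConvexOn f)
    (hM : ∀ i, (M i).PosSemidef) (hM_sum : (∑ i, M i).PosDef) (ht : ∀ i, 0 < t i) :
    standardDivergence f (∑ i, t i • M i) (∑ i, M i) ≤ ∑ i, f (t i) * (M i).trace.re := by
  have tendsto_weight (i : ι) : Tendsto (blendWeight · t i) (𝓝[>] 0) (𝓝 (t i)) :=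
    (tendsto_blendWeight t i).mono_left nhdsWithin_le_nhds
  have tendsto_f (i : ι) : Tendsto (fun δ ↦ f (blendWeight δ t i)) (𝓝[>] 0) (𝓝 (f (t i))) :=
    (hf.continuousOn.continuousAt (Ioi_mem_nhds (ht i))).tendsto.comp (tendsto_weight i)
  have tendsto_trace (i : ι) :
      Tendsto (fun δ ↦ (blend δ M i).trace.re) (𝓝[>] 0) (𝓝 (M i).trace.re) := by
    have continuous_re_trace : Continuous fun X : Matrix p p ℂ ↦ X.trace.re := by fun_prop
    exact (continuous_re_trace.tendsto _).comp
      ((tendsto_blend M i).mono_left nhdsWithin_le_nhds)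
  have weight_pos : ∀ᶠ δ in 𝓝[>] 0, ∀ i, 0 < blendWeight δ t i :=
    eventually_all.mpr fun i ↦ (tendsto_weight i).eventually (Ioi_mem_nhds (ht i))
  refine ge_of_tendsto (tendsto_finsetSum _ fun i _ ↦ (tendsto_f i).mul (tendsto_trace i)) ?_
  filter_upwards [self_mem_nhdsWithin, weight_pos] with δ (hδ : 0 < δ) hw
  have posDef_blend (i : ι) : (blend δ M i).PosDef :=
    (PosDef.posSemidef_add (hM i) (hM_sum.smul hδ)).smul (by positivity)
  have h := hf.standardDivergence_sum_le posDef_blend hw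
  rwa [sum_blendWeight_smul_blend hδ.le, sum_blend hδ.le] at h

end StandardDivergence

section SpectralProjections

variable {n : ℕ} {A : Matrix (Fin n) (Fin n) ℂ}

lemma posSemidef_specProj (A : Matrix (Fin n) (Fin n) ℂ) (a : ℝ) : (specProj A a).PosSemidef :=
  Matrix.nonneg_iff_posSemidef.mp <| cfc_nonneg fun x _ ↦ by split_ifs <;> simp

lemma sum_smul_specProj (f : ℝ → ℝ) (A : Matrix (Fin n) (Fin n) ℂ) :
    ∑ a ∈ A.finite_real_spectrum.toFinset, f a • specProj A a = cfc f A := by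
  have continuousOn (g : ℝ → ℝ) : ContinuousOn g (spectrum ℝ A) :=
    A.finite_real_spectrum.continuousOn g
  simp only [specProj, ← cfc_smul _ _ A (continuousOn _)]
  rw [← cfc_sum _ A _ fun _ _ ↦ continuousOn _]
  refine cfc_congr fun x hx ↦ ?_
  simp [hx]

lemma sum_specProj (hA : A.IsHermitian) :
    ∑ a ∈ A.finite_real_spectrum.toFinset, specProj A a = 1 := by
  have h := sum_smul_specProj (fun _ ↦ 1) A
  rw [cfc_const_one ℝ A hA.isSelfAdjoint] at h
  simpa using h

lemma mul_specProj (hA : A.IsHermitian) (a : ℝ) : A * specProj A a = a • specProj A a := by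
  have continuousOn (g : ℝ → ℝ) : ContinuousOn g (spectrum ℝ A) :=
    A.finite_real_spectrum.continuousOn g
  nth_rw 1 [← cfc_id' ℝ A hA.isSelfAdjoint]
  rw [specProj, ← cfc_mul _ _ A (continuousOn _) (continuousOn _),
    ← cfc_smul _ _ A (continuousOn _)]
  refine cfc_congr fun x _ ↦ ?_
  by_cases h : x = a <;> simp [h]

lemma specProj_mul (hA : A.IsHermitian) (a : ℝ) : specProj A a * A = a • specProj A a := by
  have h := congr($(mul_specProj hA a)ᴴ)
  rwa [conjTranspose_mul, conjTranspose_smul, hA.eq, (posSemidef_specProj A a).isHermitian.eq,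
    star_trivial] at h

lemma vec_one_eq_sum_specProj {ρ σ : Matrix (Fin n) (Fin n) ℂ} (hρ : ρ.IsHermitian)
    (hσ : σ.IsHermitian) : vec 1 = ∑ a ∈ ρ.finite_real_spectrum.toFinset,
      ∑ b ∈ σ.finite_real_spectrum.toFinset, vec (specProj ρ a * specProj σ b) := by
  simp_rw [← vec_sum, ← Matrix.mul_sum, ← Matrix.sum_mul, sum_specProj hρ, sum_specProj hσ,
    Matrix.one_mul]

lemma standardDivergence_eq_finsum (f : ℝ → ℝ) {ρ σ : Matrix (Fin n) (Fin n) ℂ}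
    (hρ : ρ.PosDef) (hσ : σ.PosDef) :
    standardDivergence f ρ σ = ∑ᶠ a ∈ spectrum ℝ ρ, ∑ᶠ b ∈ spectrum ℝ σ,
      b * f (a / b) * (Matrix.trace (specProj ρ a * specProj σ b)).re := by
  rw [standardDivergence]
  nth_rw 2 [vec_one_eq_sum_specProj hρ.isHermitian hσ.isHermitian]
  simp only [mulVec_sum, dotProduct_sum, Complex.re_sum,
    finsum_mem_eq_finite_toFinset_sum _ ρ.finite_real_spectrum,
    finsum_mem_eq_finite_toFinset_sum _ σ.finite_real_spectrum]
  refine Finset.sum_congr rfl fun a _ ↦ Finset.sum_congr rfl fun b hb ↦ ?_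
  have b_pos : 0 < b := hσ.isStrictlyPositive.spectrum_pos (by simpa using hb)
  have mul_eq : ρ * (specProj ρ a * specProj σ b) = a • (specProj ρ a * specProj σ b) := by
    rw [← Matrix.mul_assoc, mul_specProj hρ.isHermitian, Matrix.smul_mul]
  have eq_mul : specProj ρ a * specProj σ b * σ = b • (specProj ρ a * specProj σ b) := by
    rw [Matrix.mul_assoc, specProj_mul hσ.isHermitian, Matrix.mul_smul]
  rw [perspective_mulVec_vec f hρ hσ mul_eq eq_mul b_pos.ne', dotProduct_smul,
    star_vec_one_dotProduct_vec, Complex.smul_re, smul_eq_mul]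

lemma mpow_eq_rpow (hA : A.PosDef) (t : ℝ) : mpow A t = A ^ t := by
  rw [mpow, CFC.rpow_eq_cfc_real hA.posSemidef.nonneg]
  exact cfc_congr fun x hx ↦ if_neg (hA.isStrictlyPositive.spectrum_pos hx).ne'

lemma mpow_half (hA : A.PosDef) : mpow A (1 / 2) = CFC.sqrt A := by
  rw [mpow_eq_rpow hA, CFC.sqrt_eq_rpow]

lemma mpow_neg_half (hA : A.PosDef) : mpow A (-(1 / 2)) = (CFC.sqrt A)⁻¹ := by
  rw [mpow_eq_rpow hA, CFC.sqrt_eq_rpow]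
  exact (inv_eq_left_inv (CFC.rpow_neg_mul_rpow (1 / 2) hA.isStrictlyPositive)).symm

theorem OperatorConvexOn.standardDivergence_le_trace_perspective {f : ℝ → ℝ}
    (hf : OperatorConvexOn f) {ρ σ : Matrix (Fin n) (Fin n) ℂ} (hρ : ρ.PosDef) (hσ : σ.PosDef) :
    standardDivergence f ρ σ ≤ (perspective f ρ σ).trace.re := by
  let S := CFC.sqrt σ
  let T := S⁻¹ * ρ * S⁻¹
  have hT : T.PosDef := posDef_inv_sqrt_mul_mul hρ hσ
  let M (t : T.finite_real_spectrum.toFinset) : Matrix (Fin n) (Fin n) ℂ := S * specProj T t * S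
  have perspective_eq_sum (g : ℝ → ℝ) :
      perspective g ρ σ = ∑ t : T.finite_real_spectrum.toFinset, g t • M t := by
    rw [perspective, ← sum_smul_specProj, ← Finset.sum_coe_sort]
    simp only [M, Matrix.mul_sum, Matrix.sum_mul, Matrix.mul_smul, Matrix.smul_mul, S, T]
  have sum_M : ∑ t, M t = σ := by
    simpa [perspective_one hρ.isHermitian hσ] using (perspective_eq_sum fun _ ↦ 1).symm
  have sum_smul_M : ∑ t : T.finite_real_spectrum.toFinset, (t : ℝ) • M t = ρ := by
    rw [← perspective_eq_sum fun x ↦ x, perspective_id hρ.isHermitian hσ]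
  have posSemidef_M (t) : (M t).PosSemidef := by
    have h := (posSemidef_specProj T t).conjTranspose_mul_mul_same S
    rwa [(posDef_sqrt hσ).isHermitian.eq] at h
  have spectrum_pos (t : T.finite_real_spectrum.toFinset) : (0 : ℝ) < t :=
    hT.isStrictlyPositive.spectrum_pos (T.finite_real_spectrum.mem_toFinset.mp t.2)
  have h := hf.standardDivergence_sum_le_of_posSemidef posSemidef_M (by rwa [sum_M]) spectrum_pos
  rw [sum_M, sum_smul_M] at h
  simpa only [perspective_eq_sum f, trace_sum, trace_smul, Complex.re_sum, Complex.smul_re,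
    smul_eq_mul] using h

end SpectralProjections

/-- For an operator convex `f` and positive definite `ρ, σ`, the standard
`f`-divergence `S_f(ρ‖σ) = Σ_{a,b} b·f(a/b)·Tr(P_a Q_b)` is dominated by the maximal
`f`-divergence `Ŝ_f(ρ‖σ) = Tr(σ^{1/2} f(σ^{-1/2} ρ σ^{-1/2}) σ^{1/2})`. -/
theorem stmt0 {n : ℕ} (f : ℝ → ℝ) (hf : OperatorConvexOn f)
    (ρ σ : Matrix (Fin n) (Fin n) ℂ) (hρ : ρ.PosDef) (hσ : σ.PosDef) :
    (∑ᶠ a ∈ spectrum ℝ ρ, ∑ᶠ b ∈ spectrum ℝ σ,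
        b * f (a / b) * (Matrix.trace (specProj ρ a * specProj σ b)).re)
      ≤ (Matrix.trace (mpow σ (1/2) *
          cfc f (mpow σ (-(1/2)) * ρ * mpow σ (-(1/2))) * mpow σ (1/2))).re := by
  rw [← standardDivergence_eq_finsum f hρ hσ, mpow_half hσ, mpow_neg_half hσ]
  exact hf.standardDivergence_le_trace_perspective hρ hσ
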